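/- Let N ≥ 1, h > 0, and let θ, r, Y be discrete functions such that θ_i·r_i = 1 for every 0 ≤ i ≤ N+1 (i.e. r = θ^{-1} pointwise). Then for every index 1 ≤ i ≤ N: θ_i·(Δ_h(rY))_i = θ_i(Δ_h r)_i·Y_i + (1 + (h²/2)·θ_i(Δ_h r)_i)·(Δ_h Y)_i + 2·θ_i(D_h r)_i·(D_h Y)_i, where rY is the pointwise product. (Identity (3.2), the conjugation identity for the discrete Laplacian used in the proof of the discrete Carleman estimate.) -/

import Mathlib

/-!
The discrete Leibniz rule `lapH_mul` expresses `Δ_h(rY)` as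
`(Δ_h r) Y + (r + (h²/2) Δ_h r) Δ_h Y + 2 (D_h r)(D_h Y)`, where `r + (h²/2) Δ_h r` is the mean of the
two neighbouring values of `r`. Multiplying by `θ` and using `θ r = 1` at the node `i` gives the
conjugation identity.
-/

/-- Forward averaging operator: (m_h^+ u)_i = (u_{i+1}+u_i)/2. -/
noncomputable def mhp (u : ℕ → ℝ) (i : ℕ) : ℝ := (u (i+1) + u i) / 2

/-- Backward averaging operator: (m_h^- u)_i = (u_i+u_{i-1})/2. -/
noncomputable def mhm (u : ℕ → ℝ) (i : ℕ) : ℝ := (u i + u (i-1)) / 2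

/-- Central averaging operator: (m_h u)_i = (u_{i+1}+2u_i+u_{i-1})/4. -/
noncomputable def mh (u : ℕ → ℝ) (i : ℕ) : ℝ := (u (i+1) + 2 * u i + u (i-1)) / 4

/-- Forward difference: (D_h^+ u)_i = (u_{i+1}-u_i)/h. -/
noncomputable def Dhp (h : ℝ) (u : ℕ → ℝ) (i : ℕ) : ℝ := (u (i+1) - u i) / h

/-- Backward difference: (D_h^- u)_i = (u_i-u_{i-1})/h. -/
noncomputable def Dhm (h : ℝ) (u : ℕ → ℝ) (i : ℕ) : ℝ := (u i - u (i-1)) / h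

/-- Central difference: (D_h u)_i = (u_{i+1}-u_{i-1})/(2h). -/
noncomputable def Dh (h : ℝ) (u : ℕ → ℝ) (i : ℕ) : ℝ := (u (i+1) - u (i-1)) / (2 * h)

/-- Discrete Laplacian: (Delta_h u)_i = (u_{i+1}-2u_i+u_{i-1})/h^2. -/
noncomputable def lapH (h : ℝ) (u : ℕ → ℝ) (i : ℕ) : ℝ := (u (i+1) - 2 * u i + u (i-1)) / h^2

/-- Discrete Leibniz rule for the Laplacian: a polynomial identity in the values at the three nodes
of the stencil, once the powers of `h` are cleared. -/
theorem lapH_mul {h : ℝ} (hh : h ≠ 0) (r Y : ℕ → ℝ) (i : ℕ) :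
    lapH h (fun j => r j * Y j) i
      = lapH h r i * Y i + (r i + (h^2 / 2) * lapH h r i) * lapH h Y i
        + 2 * Dh h r i * Dh h Y i := by
  simp only [lapH, Dh]
  field_simp
  ring

/-- Identity (3.2): the conjugation identity for the discrete Laplacian. -/
theorem conjugated_discrete_laplacian
    (N : ℕ) (hN : 1 ≤ N) (h : ℝ) (hh : 0 < h) (θ r Y : ℕ → ℝ)
    (hinv : ∀ i, i ≤ N + 1 → θ i * r i = 1) :
    ∀ i, 1 ≤ i → i ≤ N →
      θ i * lapH h (fun j => r j * Y j) i
        = θ i * lapH h r i * Y i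
          + (1 + (h^2 / 2) * (θ i * lapH h r i)) * lapH h Y i
          + 2 * (θ i * Dh h r i) * Dh h Y i := by
  intro i _ hi
  rw [lapH_mul hh.ne' r Y i]
  linear_combination lapH h Y i * hinv i (by omega)
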